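/- Let (Q,·,e) be a loop with principal right isostrophe (Q,∘), where x∘y = x/(y^r). Then: (1) the left nucleus of (Q,·) equals the left nucleus of (Q,∘); (2) the middle nucleus of (Q,·) equals the right nucleus of (Q,∘). -/

import Mathlib

/-- A loop `(Q, ·, e)`: a quasigroup with two-sided identity, presented with
explicit left division `ldiv a b = a \ b` and right division `rdiv b a = b / a`. -/
structure LoopStr (Q : Type*) where
  mul : Q → Q → Q
  e : Q
  ldiv : Q → Q → Q
  rdiv : Q → Q → Q
  one_mul : ∀ x, mul e x = x
  mul_one : ∀ x, mul x e = x
  mul_ldiv : ∀ a b, mul a (ldiv a b) = b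
  ldiv_mul : ∀ a b, ldiv a (mul a b) = b
  rdiv_mul : ∀ a b, mul (rdiv b a) a = b
  mul_rdiv : ∀ a b, rdiv (mul b a) a = b

namespace LoopStr

variable {Q : Type*} (S : LoopStr Q)

/-- The left inverse `x^ℓ = e / x`. -/
def linv (x : Q) : Q := S.rdiv S.e x

/-- The right inverse `x^r = x \ e`. -/
def rinv (x : Q) : Q := S.ldiv x S.e

/-- The left nucleus. -/
def lnuc : Set Q := {a | ∀ x y, S.mul (S.mul a x) y = S.mul a (S.mul x y)}

/-- The middle nucleus. -/
def mnuc : Set Q := {a | ∀ x y, S.mul (S.mul x a) y = S.mul x (S.mul a y)}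

/-- The right nucleus. -/
def rnuc : Set Q := {a | ∀ x y, S.mul (S.mul x y) a = S.mul x (S.mul y a)}

/-- The commutant `C(Q)`. -/
def commutant : Set Q := {a | ∀ x, S.mul a x = S.mul x a}

/-- The center `Z(Q) = C(Q) ∩ Nuc_ℓ ∩ Nuc_m ∩ Nuc_r`. -/
def center : Set Q := S.commutant ∩ S.lnuc ∩ S.mnuc ∩ S.rnuc

/-- The left translation `L_a` as a map. -/
def leftMul (a : Q) : Q → Q := fun x => S.mul a x

/-- The left translation `L_a` as a permutation of `Q`. -/
def leftPerm (a : Q) : Equiv.Perm Q :=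
  ⟨fun x => S.mul a x, fun x => S.ldiv a x, S.ldiv_mul a, S.mul_ldiv a⟩

/-- The right translation `R_a` as a permutation of `Q`. -/
def rightPerm (a : Q) : Equiv.Perm Q :=
  ⟨fun x => S.mul x a, fun x => S.rdiv x a, fun x => S.mul_rdiv a x, fun x => S.rdiv_mul a x⟩

/-- The multiplication group `Mlt(Q) = ⟨L_x, R_x : x ∈ Q⟩ ≤ Sym(Q)`. -/
def Mlt : Subgroup (Equiv.Perm Q) :=
  Subgroup.closure (Set.range S.leftPerm ∪ Set.range S.rightPerm)

/-- `x^n = L_x^n(e)` for natural `n`. -/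
def npow (a : Q) (n : ℕ) : Q := (S.leftPerm a ^ n) S.e

/-- `x^n = L_x^n(e)` for integer `n`. -/
def zpow (a : Q) (n : ℤ) : Q := (S.leftPerm a ^ n) S.e

/-- The order of an element: the least `n > 0` with `x^n = e` (or `0` if none exists). -/
noncomputable def lorder (a : Q) : ℕ := sInf {n : ℕ | 0 < n ∧ S.npow a n = S.e}

/-- A subloop: contains `e`, closed under multiplication and both divisions. -/
def IsSubloop (N : Set Q) : Prop :=
  S.e ∈ N ∧ (∀ a ∈ N, ∀ b ∈ N, S.mul a b ∈ N) ∧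
    (∀ a ∈ N, ∀ b ∈ N, S.ldiv a b ∈ N) ∧ (∀ a ∈ N, ∀ b ∈ N, S.rdiv a b ∈ N)

/-- A normal subloop: a subloop with `xN = Nx`, `(xN)y = x(Ny)`, `N(xy) = (Nx)y`
elementwise as sets. -/
def IsNormalSubloop (N : Set Q) : Prop :=
  S.IsSubloop N ∧
  (∀ x : Q, (fun a => S.mul x a) '' N = (fun a => S.mul a x) '' N) ∧
  (∀ x y : Q, (fun a => S.mul (S.mul x a) y) '' N = (fun a => S.mul x (S.mul a y)) '' N) ∧
  (∀ x y : Q, (fun a => S.mul a (S.mul x y)) '' N = (fun a => S.mul (S.mul a x) y) '' N)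

/-- A loop is simple if its only normal subloops are `{e}` and `Q`. -/
def IsSimple : Prop :=
  ∀ N : Set Q, S.IsNormalSubloop N → N = {S.e} ∨ N = Set.univ

lemma mul_rinv (x : Q) : S.mul x (S.rinv x) = S.e := S.mul_ldiv x S.e

lemma linv_mul (x : Q) : S.mul (S.linv x) x = S.e := S.rdiv_mul x S.e

lemma linv_rinv (x : Q) : S.linv (S.rinv x) = x := by
  have h := S.mul_rdiv (S.rinv x) x
  rw [S.mul_rinv] at h
  exact h

lemma rinv_linv (x : Q) : S.rinv (S.linv x) = x := by
  have h := S.ldiv_mul (S.linv x) x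
  rw [S.linv_mul] at h
  exact h

lemma rinv_e : S.rinv S.e = S.e := by
  have h := S.ldiv_mul S.e S.e
  rw [S.one_mul] at h
  exact h

lemma rdiv_e (x : Q) : S.rdiv x S.e = x := by
  have h := S.mul_rdiv S.e x
  rw [S.mul_one] at h
  exact h

/-- The principal right isostrophe `(Q, ∘)` of `(Q, ·)`, with `x ∘ y = x / (y^r)`,
right division `x // y = x·(y^r)` and left division `x \\ y = (y \ x)^ℓ`. -/
def iso : LoopStr Q where
  mul x y := S.rdiv x (S.rinv y)
  e := S.e
  ldiv x y := S.linv (S.ldiv y x)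
  rdiv x y := S.mul x (S.rinv y)
  one_mul x := S.linv_rinv x
  mul_one x := by
    show S.rdiv x (S.rinv S.e) = x
    rw [S.rinv_e, S.rdiv_e]
  mul_ldiv a b := by
    show S.rdiv a (S.rinv (S.linv (S.ldiv b a))) = b
    rw [S.rinv_linv]
    have h := S.mul_rdiv (S.ldiv b a) b
    rw [S.mul_ldiv] at h
    exact h
  ldiv_mul a b := by
    show S.linv (S.ldiv (S.rdiv a (S.rinv b)) a) = b
    have h := S.ldiv_mul (S.rdiv a (S.rinv b)) (S.rinv b)
    rw [S.rdiv_mul] at h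
    rw [h, S.linv_rinv]
  rdiv_mul a b := by
    show S.rdiv (S.mul b (S.rinv a)) (S.rinv a) = b
    exact S.mul_rdiv (S.rinv a) b
  mul_rdiv a b := by
    show S.mul (S.rdiv b (S.rinv a)) (S.rinv a) = b
    exact S.rdiv_mul (S.rinv a) b

end LoopStr

namespace LoopStr

variable {Q : Type*} (S : LoopStr Q)

lemma iso_mul (x y : Q) : S.iso.mul x y = S.rdiv x (S.rinv y) := rfl

variable {S}

lemma mul_left_cancel {a x y : Q} (h : S.mul a x = S.mul a y) : x = y := by
  rw [← S.ldiv_mul a x, h, S.ldiv_mul]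

lemma rdiv_eq_of_eq_mul {a b c : Q} (h : b = S.mul c a) : S.rdiv b a = c := by
  rw [h, S.mul_rdiv]

lemma rinv_eq_of_mul_eq_e {a b : Q} (h : S.mul a b = S.e) : S.rinv a = b :=
  mul_left_cancel ((S.mul_rinv a).trans h.symm)

lemma iso_mul_eq_mul_of_mem_lnuc {a : Q} (ha : a ∈ S.lnuc) (x : Q) :
    S.iso.mul a x = S.mul a x :=
  rdiv_eq_of_eq_mul (by rw [ha, S.mul_rinv, S.mul_one])

lemma mem_iso_lnuc_iff {a : Q} : a ∈ S.iso.lnuc ↔ a ∈ S.lnuc := by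
  constructor
  · intro ha
    have key : ∀ w z, S.iso.mul a (S.mul w z) = S.mul (S.iso.mul a w) z := by
      intro w z
      have h := ha (S.mul w z) (S.linv z)
      rw [S.iso_mul _ (S.linv z), S.iso_mul _ (S.linv z), S.rinv_linv, S.mul_rdiv] at h
      rw [← h, S.rdiv_mul]
    have hmul : ∀ z, S.iso.mul a z = S.mul a z := by
      intro z
      have h := key S.e z
      rwa [S.one_mul, show S.iso.mul a S.e = a from S.iso.mul_one a] at h
    intro x y
    rw [← hmul x, ← hmul, key]
  · intro ha x y
    rw [iso_mul_eq_mul_of_mem_lnuc ha, iso_mul_eq_mul_of_mem_lnuc ha, iso_mul, iso_mul]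
    exact rdiv_eq_of_eq_mul (by rw [ha, S.rdiv_mul])

lemma rinv_eq_linv_of_mem_mnuc {a : Q} (ha : a ∈ S.mnuc) : S.rinv a = S.linv a := by
  have h := ha (S.linv a) (S.rinv a)
  rwa [S.linv_mul, S.one_mul, S.mul_rinv, S.mul_one] at h

lemma rinv_mem_mnuc {a : Q} (ha : a ∈ S.mnuc) : S.rinv a ∈ S.mnuc := by
  have hleft : ∀ y, S.mul a (S.mul (S.rinv a) y) = y := by
    intro y
    have h := ha (S.linv a) (S.ldiv a y)
    rw [S.linv_mul, S.one_mul, S.mul_ldiv, ← rinv_eq_linv_of_mem_mnuc ha] at h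
    rw [← h, S.mul_ldiv]
  intro x y
  have hx : S.mul x (S.rinv a) = S.rdiv x a := by
    have h := ha (S.rdiv x a) (S.rinv a)
    rwa [S.rdiv_mul, S.mul_rinv, S.mul_one] at h
  have h := ha (S.rdiv x a) (S.mul (S.rinv a) y)
  rw [S.rdiv_mul, hleft] at h
  rw [hx, h]

lemma rinv_mem_mnuc_iff {a : Q} : S.rinv a ∈ S.mnuc ↔ a ∈ S.mnuc := by
  refine ⟨fun h => ?_, rinv_mem_mnuc⟩
  have h' := rinv_mem_mnuc h
  rwa [rinv_eq_linv_of_mem_mnuc h, S.linv_rinv] at h'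

lemma mem_iso_rnuc_iff_rinv_mem_mnuc {a : Q} : a ∈ S.iso.rnuc ↔ S.rinv a ∈ S.mnuc := by
  constructor
  · intro ha
    have key : ∀ u z, S.mul (S.mul u (S.rinv a)) z =
        S.mul u (S.rinv (S.iso.mul (S.linv z) a)) := by
      intro u z
      have h := ha (S.mul (S.mul u (S.rinv a)) z) (S.linv z)
      rw [S.iso_mul _ (S.linv z), S.rinv_linv, S.mul_rdiv, S.iso_mul _ a, S.mul_rdiv,
        S.iso_mul _ (S.iso.mul _ _)] at h
      nth_rewrite 2 [h]
      rw [S.rdiv_mul]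
    intro u z
    have h := key S.e z
    rw [S.one_mul, S.one_mul] at h
    rw [key, h]
  · intro hb x y
    have hy : S.rinv (S.rdiv y (S.rinv a)) = S.mul (S.rinv a) (S.rinv y) :=
      rinv_eq_of_mul_eq_e (by rw [← hb, S.rdiv_mul, S.mul_rinv])
    simp only [iso_mul, hy]
    exact (rdiv_eq_of_eq_mul (by rw [← hb, S.rdiv_mul, S.rdiv_mul])).symm

end LoopStr

/-- The left nucleus of `(Q,·)` equals the left nucleus of its principal
right isostrophe `(Q,∘)`, and the middle nucleus of `(Q,·)` equals the right nucleus
of `(Q,∘)`. -/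
theorem iso_nuclei {Q : Type*} (S : LoopStr Q) :
    S.iso.lnuc = S.lnuc ∧ S.iso.rnuc = S.mnuc :=
  ⟨Set.ext fun _ => LoopStr.mem_iso_lnuc_iff,
    Set.ext fun _ => LoopStr.mem_iso_rnuc_iff_rinv_mem_mnuc.trans LoopStr.rinv_mem_mnuc_iff⟩
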